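/- arXiv:1410.4315 — 2 statements merged into one kernel-verified Lean document; each statement's English description precedes it below -/
import Mathlib

section
/- Let n ∈ ℕ, σ ∈ {0,1}^n, and let μ_{j,m} be the Haar coefficients of the local discrepancy of the digit shifted Hammersley point set R_{n,σ} with N = 2^n points. If j = (−1,k) or j = (k,−1) with k ∈ ℕ_0 and k ≥ n, then |μ_{j,m}| = 2^{−(2k+3)} for all m ∈ D_j. -/
open MeasureTheory

/-- The real value of a binary digit. -/
noncomputable def bval (b : Bool) : ℝ := if b then 1 else 0

/-- The two-dimensional digit shifted Hammersley point set with `2^n` points,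
indexed by the digit vectors `t : Fin n → Bool`.  The index `i : Fin n`
corresponds to the digit `t_{i+1}` of the paper. -/
noncomputable def hammersleyShifted (n : ℕ) (σ : Fin n → Bool) (t : Fin n → Bool) : ℝ × ℝ :=
  (∑ i : Fin n, bval (t i) / 2 ^ (n - i.val),
   ∑ i : Fin n, bval (t i != σ i) / 2 ^ (i.val + 1))

/-- Number of points of the (indexed) point set `P` lying in `[0,t₁) × [0,t₂)`. -/
noncomputable def countIn {ι : Type*} [Fintype ι] (P : ι → ℝ × ℝ) (t : ℝ × ℝ) : ℕ :=
  (Finset.univ.filter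
    (fun k => 0 ≤ (P k).1 ∧ (P k).1 < t.1 ∧ 0 ≤ (P k).2 ∧ (P k).2 < t.2)).card

/-- The local discrepancy `D_N(P,t) = A_N([0,t),P)/N - t₁t₂` of an indexed point set. -/
noncomputable def localDisc {ι : Type*} [Fintype ι] (P : ι → ℝ × ℝ) (t : ℝ × ℝ) : ℝ :=
  (countIn P t : ℝ) / (Fintype.card ι) - t.1 * t.2

/-- The `L_p`-discrepancy of an indexed point set. -/
noncomputable def LpDisc (p : ℝ) {ι : Type*} [Fintype ι] (P : ι → ℝ × ℝ) : ℝ :=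
  (∫ t in Set.Icc (0 : ℝ × ℝ) 1, |localDisc P t| ^ p) ^ (1 / p)

/-- One-dimensional `L∞`-normalized Haar function `h_{j,m}`, with `j ∈ ℤ`, `j = -1`
giving the indicator of `[0,1)` and `j ≥ 0` the usual Haar function on `I_{j,m}`. -/
noncomputable def haar1 (j : ℤ) (m : ℕ) (x : ℝ) : ℝ :=
  if j = -1 then (if 0 ≤ x ∧ x < 1 then 1 else 0)
  else if (2 * m : ℝ) / 2 ^ (j.toNat + 1) ≤ x ∧ x < (2 * m + 1 : ℝ) / 2 ^ (j.toNat + 1) then 1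
  else if (2 * m + 1 : ℝ) / 2 ^ (j.toNat + 1) ≤ x ∧ x < (2 * m + 2 : ℝ) / 2 ^ (j.toNat + 1) then -1
  else 0

/-- Two-dimensional (tensor product) Haar function. -/
noncomputable def haar2 (j : ℤ × ℤ) (m : ℕ × ℕ) (x : ℝ × ℝ) : ℝ :=
  haar1 j.1 m.1 x.1 * haar1 j.2 m.2 x.2

/-- One-dimensional dyadic interval `I_{j,m}` (with `I_{-1,0} = [0,1)`). -/
noncomputable def dyadicI (j : ℤ) (m : ℕ) : Set ℝ :=
  if j = -1 then Set.Ico (0 : ℝ) 1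
  else Set.Ico ((m : ℝ) / 2 ^ j.toNat) ((m + 1 : ℝ) / 2 ^ j.toNat)

/-- Haar coefficient `μ_{j,m} = ∫_{[0,1]²} D_N(P,t) h_{j,m}(t) dt` of the local
discrepancy of an indexed point set. -/
noncomputable def haarCoeff {ι : Type*} [Fintype ι] (P : ι → ℝ × ℝ) (j : ℤ × ℤ) (m : ℕ × ℕ) : ℝ :=
  ∫ t in Set.Icc (0 : ℝ × ℝ) 1, localDisc P t * haar2 j m t

/-- Number of zero components of the shift `σ`. -/
noncomputable def zeroCount {n : ℕ} (σ : Fin n → Bool) : ℕ :=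
  (Finset.univ.filter (fun j => σ j = false)).card

/-- The symmetrized digit shifted Hammersley point set `R_{n,σ} ∪ R_{n,σ⊕1}`
with `2^(n+1)` points, indexed by `Bool × (Fin n → Bool)`. -/
noncomputable def hammersleySym (n : ℕ) (σ : Fin n → Bool) :
    Bool × (Fin n → Bool) → ℝ × ℝ :=
  fun bt => if bt.1 then hammersleyShifted n (fun i => !(σ i)) bt.2
            else hammersleyShifted n σ bt.2

/-- The multiset `R_{n,σ} ∪ {(x, 1-y) : (x,y) ∈ R_{n,σ}}` with `2^(n+1)` points
(counted with multiplicity), indexed by `Bool × (Fin n → Bool)`. -/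
noncomputable def hammersleySymTilde (n : ℕ) (σ : Fin n → Bool) :
    Bool × (Fin n → Bool) → ℝ × ℝ :=
  fun bt => if bt.1 then ((hammersleyShifted n σ bt.2).1, 1 - (hammersleyShifted n σ bt.2).2)
            else hammersleyShifted n σ bt.2

/-! Both the counting function and the product `t₁t₂` in the discrepancy are linear combinations of
tensor products, so by Fubini every Haar coefficient reduces to one-dimensional ones. A coordinate
`p` of a point enters through the step function `t ↦ 1_{[0,t)}(p)`. If `p` is a multiple of
`2^{-k}`, this function is constant in the interior of each dyadic interval of level `k`, so its
Haar coefficients of level `k` vanish. Only the contribution of `t₁t₂` survives. -/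

open Set

lemma measurable_haar1 (j : ℤ) (m : ℕ) : Measurable (haar1 j m) := by
  unfold haar1
  split_ifs
  · exact Measurable.ite measurableSet_Ico measurable_const measurable_const
  · exact Measurable.ite measurableSet_Ico measurable_const
      (Measurable.ite measurableSet_Ico measurable_const measurable_const)

lemma abs_haar1_le_one (j : ℤ) (m : ℕ) (x : ℝ) : |haar1 j m x| ≤ 1 := by
  unfold haar1
  split_ifs <;> simp

lemma integrableOn_mul_haar1 {f : ℝ → ℝ} {s : Set ℝ} (hf : IntegrableOn f s) (j : ℤ) (m : ℕ) :
    IntegrableOn (fun t ↦ f t * haar1 j m t) s :=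
  Integrable.mul_bdd hf (measurable_haar1 j m).aestronglyMeasurable
    (.of_forall (abs_haar1_le_one j m))

lemma haar1_natCast (k m : ℕ) (t : ℝ) :
    haar1 k m t = (Ico ((m : ℝ) / 2 ^ k) ((m + 1 / 2) / 2 ^ k)).indicator 1 t -
      (Ico (((m : ℝ) + 1 / 2) / 2 ^ k) ((m + 1) / 2 ^ k)).indicator 1 t := by
  have half_div (x : ℝ) : 2 * x / 2 ^ (k + 1) = x / 2 ^ k := by rw [pow_succ]; field_simp
  have hk : (k : ℤ) ≠ -1 := by lia
  simp only [haar1, if_neg hk, Int.toNat_natCast, ← half_div, indicator_apply, mem_Ico,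
    Pi.one_apply, mul_add, mul_one_div_cancel (two_ne_zero' ℝ), mul_one]
  grind

section OneDimensional

/-- The Haar coefficient `∫₀¹ f(t) h_{j,m}(t) dt` of a function of one variable. -/
noncomputable def haarCoeff1 (j : ℤ) (m : ℕ) (f : ℝ → ℝ) : ℝ :=
  ∫ t in Icc (0 : ℝ) 1, f t * haar1 j m t

lemma haarCoeff1_neg_one (m : ℕ) (f : ℝ → ℝ) : haarCoeff1 (-1) m f = ∫ t in 0..1, f t := by
  have mul_haar1_eq : EqOn (fun t ↦ f t * haar1 (-1) m t) f (Ico 0 1) :=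
    fun t ht ↦ by simp [haar1, ht.1, ht.2]
  rw [haarCoeff1, integral_Icc_eq_integral_Ico,
    setIntegral_congr_fun measurableSet_Ico mul_haar1_eq,
    intervalIntegral.integral_of_le zero_le_one, integral_Ico_eq_integral_Ioc]

variable {k m : ℕ}

lemma haarCoeff1_natCast (hm : m < 2 ^ k) {f : ℝ → ℝ}
    (hf : IntervalIntegrable f volume (m / 2 ^ k) ((m + 1) / 2 ^ k)) :
    haarCoeff1 k m f = (∫ t in (m / 2 ^ k : ℝ)..(m + 1 / 2) / 2 ^ k, f t) -
      ∫ t in ((m + 1 / 2) / 2 ^ k : ℝ)..(m + 1) / 2 ^ k, f t := by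
  set a : ℝ := m / 2 ^ k
  set b : ℝ := (m + 1 / 2) / 2 ^ k
  set c : ℝ := (m + 1) / 2 ^ k
  have zero_le_a : 0 ≤ a := by positivity
  have a_le_b : a ≤ b := by dsimp only [a, b]; gcongr; norm_num
  have b_le_c : b ≤ c := by dsimp only [b, c]; gcongr; norm_num
  have c_le_one : c ≤ 1 := (div_le_one (by positivity)).2 (mod_cast hm)
  have hfac : IntegrableOn f (Ico a c) :=
    (intervalIntegrable_iff_integrableOn_Ico_of_le (a_le_b.trans b_le_c)).1 hf
  have integrable_half {u v : ℝ} (hu : a ≤ u) (hv : v ≤ c) :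
      IntegrableOn ((Ico u v).indicator f) (Icc 0 1) :=
    ((integrable_indicator_iff measurableSet_Ico).2
      (hfac.mono_set (Ico_subset_Ico hu hv))).integrableOn
  have integral_half {u v : ℝ} (hu : 0 ≤ u) (huv : u ≤ v) (hv : v ≤ 1) :
      ∫ t in Icc 0 1, (Ico u v).indicator f t = ∫ t in u..v, f t := by
    rw [setIntegral_indicator measurableSet_Ico,
      inter_eq_right.2 (Ico_subset_Icc_self.trans (Icc_subset_Icc hu hv)),
      intervalIntegral.integral_of_le huv, integral_Ico_eq_integral_Ioc]
  have split_halves (t : ℝ) :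
      f t * haar1 k m t = (Ico a b).indicator f t - (Ico b c).indicator f t := by
    simp only [haar1_natCast, mul_sub, ← indicator_mul_right, Pi.one_apply, mul_one, a, b, c]
  simp only [haarCoeff1, split_halves]
  rw [integral_sub (integrable_half le_rfl b_le_c) (integrable_half a_le_b le_rfl),
    integral_half zero_le_a a_le_b (b_le_c.trans c_le_one),
    integral_half (zero_le_a.trans a_le_b) b_le_c c_le_one]

lemma haarCoeff1_eq_zero_of_eqOn_const (hm : m < 2 ^ k) {f : ℝ → ℝ} {C : ℝ}
    (hf : EqOn f (fun _ ↦ C) (Ioo (m / 2 ^ k) ((m + 1) / 2 ^ k))) : haarCoeff1 k m f = 0 := by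
  have a_le_b : (m / 2 ^ k : ℝ) ≤ (m + 1 / 2) / 2 ^ k := by gcongr; norm_num
  have b_le_c : ((m + 1 / 2) / 2 ^ k : ℝ) ≤ (m + 1) / 2 ^ k := by gcongr; norm_num
  have hint : IntervalIntegrable f volume (m / 2 ^ k) ((m + 1) / 2 ^ k) :=
    intervalIntegrable_const.congr_uIoo (by rw [uIoo_of_le (a_le_b.trans b_le_c)]; exact hf.symm)
  have integral_left :
      ∫ t in (m / 2 ^ k : ℝ)..(m + 1 / 2) / 2 ^ k, f t =
        ∫ _ in (m / 2 ^ k : ℝ)..(m + 1 / 2) / 2 ^ k, C :=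
    intervalIntegral.integral_congr_uIoo
      (by rw [uIoo_of_le a_le_b]; exact hf.mono (Ioo_subset_Ioo_right b_le_c))
  have integral_right :
      ∫ t in ((m + 1 / 2) / 2 ^ k : ℝ)..(m + 1) / 2 ^ k, f t =
        ∫ _ in ((m + 1 / 2) / 2 ^ k : ℝ)..(m + 1) / 2 ^ k, C :=
    intervalIntegral.integral_congr_uIoo
      (by rw [uIoo_of_le b_le_c]; exact hf.mono (Ioo_subset_Ioo_left a_le_b))
  rw [haarCoeff1_natCast hm hint, integral_left, integral_right,
    intervalIntegral.integral_const, intervalIntegral.integral_const, smul_eq_mul, smul_eq_mul]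
  ring

lemma haarCoeff1_neg_one_id (m : ℕ) : haarCoeff1 (-1) m id = 1 / 2 := by
  simp [haarCoeff1_neg_one]

lemma haarCoeff1_natCast_id (hm : m < 2 ^ k) :
    haarCoeff1 k m id = -(1 / 2 ^ (2 * k + 2)) := by
  rw [haarCoeff1_natCast hm (continuous_id.intervalIntegrable _ _)]
  simp only [id, integral_id]
  rw [pow_add, pow_mul']
  field_simp
  ring

end OneDimensional

section StepFunction

/-- The step function `t ↦ 1_{[0,t)}(p)`, which records whether the coordinate `p` of a point is
counted by the anchored interval `[0,t)`. -/
noncomputable def anchoredIndicator (p t : ℝ) : ℝ := (Ico 0 t).indicator 1 p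

lemma monotone_anchoredIndicator (p : ℝ) : Monotone (anchoredIndicator p) := fun _ _ hst ↦
  indicator_le_indicator_of_subset (Ico_subset_Ico_right hst) (fun _ ↦ zero_le_one) p

lemma integrableOn_anchoredIndicator (p a b : ℝ) :
    IntegrableOn (anchoredIndicator p) (Icc a b) :=
  (monotone_anchoredIndicator p).monotoneOn _ |>.integrableOn_isCompact isCompact_Icc

/-- The group `2^{-k}ℤ` of endpoints of dyadic intervals of level `k`. -/
noncomputable def dyadicGrid (k : ℕ) : AddSubgroup ℝ := AddSubgroup.zmultiples (2 ^ k)⁻¹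

lemma mem_dyadicGrid {k : ℕ} {p : ℝ} : p ∈ dyadicGrid k ↔ ∃ z : ℤ, p = z / 2 ^ k := by
  simp [dyadicGrid, AddSubgroup.mem_zmultiples_iff, div_eq_mul_inv, eq_comm]

lemma exists_eqOn_anchoredIndicator_const {k : ℕ} {p : ℝ} (hp : p ∈ dyadicGrid k) (m : ℕ) :
    ∃ C, EqOn (anchoredIndicator p) (fun _ ↦ C) (Ioo (m / 2 ^ k) ((m + 1) / 2 ^ k)) := by
  obtain ⟨z, rfl⟩ := mem_dyadicGrid.1 hp
  rcases le_or_gt z m with hzm | hmz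
  · refine ⟨if 0 ≤ (z / 2 ^ k : ℝ) then 1 else 0, fun t ht ↦ ?_⟩
    have step_left : (z / 2 ^ k : ℝ) ≤ m / 2 ^ k := by gcongr; exact_mod_cast hzm
    simp [anchoredIndicator, indicator_apply, step_left.trans_lt ht.1]
  · refine ⟨0, fun t ht ↦ indicator_of_notMem (fun hz ↦ ?_) _⟩
    have step_right : ((m + 1) / 2 ^ k : ℝ) ≤ z / 2 ^ k := by gcongr; exact_mod_cast hmz
    exact (hz.2.trans ht.2).not_ge step_right

lemma haarCoeff1_anchoredIndicator_eq_zero {k m : ℕ} (hm : m < 2 ^ k) {p : ℝ}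
    (hp : p ∈ dyadicGrid k) : haarCoeff1 k m (anchoredIndicator p) = 0 :=
  let ⟨_, hC⟩ := exists_eqOn_anchoredIndicator_const hp m
  haarCoeff1_eq_zero_of_eqOn_const hm hC

end StepFunction

section TensorProduct

lemma volume_restrict_Icc_prod (a b : ℝ × ℝ) :
    volume.restrict (Icc a b) =
      (volume.restrict (Icc a.1 b.1)).prod (volume.restrict (Icc a.2 b.2)) := by
  rw [Icc_prod_eq, Measure.prod_restrict, Measure.volume_eq_prod]

lemma mul_haar2 (f g : ℝ → ℝ) (j : ℤ × ℤ) (m : ℕ × ℕ) (t : ℝ × ℝ) :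
    f t.1 * g t.2 * haar2 j m t =
      (f t.1 * haar1 j.1 m.1 t.1) * (g t.2 * haar1 j.2 m.2 t.2) :=
  mul_mul_mul_comm _ _ _ _

lemma integrableOn_tensor_mul_haar2 {f g : ℝ → ℝ} (hf : IntegrableOn f (Icc 0 1))
    (hg : IntegrableOn g (Icc 0 1)) (j : ℤ × ℤ) (m : ℕ × ℕ) :
    IntegrableOn (fun t : ℝ × ℝ ↦ f t.1 * g t.2 * haar2 j m t) (Icc 0 1) := by
  simp only [mul_haar2, IntegrableOn, volume_restrict_Icc_prod]
  exact (integrableOn_mul_haar1 hf _ _).mul_prod (integrableOn_mul_haar1 hg _ _)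

lemma integral_tensor_mul_haar2 (f g : ℝ → ℝ) (j : ℤ × ℤ) (m : ℕ × ℕ) :
    ∫ t in Icc (0 : ℝ × ℝ) 1, f t.1 * g t.2 * haar2 j m t =
      haarCoeff1 j.1 m.1 f * haarCoeff1 j.2 m.2 g := by
  simp only [mul_haar2, volume_restrict_Icc_prod]
  exact integral_prod_mul (fun t ↦ f t * haar1 j.1 m.1 t) (fun t ↦ g t * haar1 j.2 m.2 t)

variable {ι : Type*} [Fintype ι] (P : ι → ℝ × ℝ)

lemma countIn_eq_sum (t : ℝ × ℝ) :
    (countIn P t : ℝ) =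
      ∑ i, anchoredIndicator (P i).1 t.1 * anchoredIndicator (P i).2 t.2 := by
  simp only [countIn, Finset.natCast_card_filter, anchoredIndicator, indicator_apply, mem_Ico,
    Pi.one_apply, ite_zero_mul_ite_zero, mul_one, and_assoc]

lemma haarCoeff_eq_sum (j : ℤ × ℤ) (m : ℕ × ℕ) :
    haarCoeff P j m =
      (∑ i, haarCoeff1 j.1 m.1 (anchoredIndicator (P i).1) *
        haarCoeff1 j.2 m.2 (anchoredIndicator (P i).2)) / Fintype.card ι -
      haarCoeff1 j.1 m.1 id * haarCoeff1 j.2 m.2 id := by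
  have localDisc_mul_haar2 (t : ℝ × ℝ) : localDisc P t * haar2 j m t =
      (∑ i, anchoredIndicator (P i).1 t.1 * anchoredIndicator (P i).2 t.2 * haar2 j m t) /
        Fintype.card ι - id t.1 * id t.2 * haar2 j m t := by
    rw [localDisc, countIn_eq_sum, sub_mul, div_mul_eq_mul_div, Finset.sum_mul, id, id]
  have integrable_count (i : ι) := integrableOn_tensor_mul_haar2
    (integrableOn_anchoredIndicator (P i).1 0 1) (integrableOn_anchoredIndicator (P i).2 0 1) j m
  have integrable_linear := integrableOn_tensor_mul_haar2
    continuous_id.integrableOn_Icc continuous_id.integrableOn_Icc j m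
  simp only [haarCoeff, localDisc_mul_haar2]
  rw [integral_sub (.div_const (integrable_finsetSum _ fun i _ ↦ integrable_count i) _)
      integrable_linear, integral_div, integral_finsetSum _ fun i _ ↦ integrable_count i]
  simp only [integral_tensor_mul_haar2]

variable {P} {k m : ℕ}

lemma haarCoeff_of_snd_mem_dyadicGrid (hP : ∀ i, (P i).2 ∈ dyadicGrid k) (hm : m < 2 ^ k)
    (j : ℤ) (l : ℕ) :
    haarCoeff P (j, k) (l, m) = haarCoeff1 j l id / 2 ^ (2 * k + 2) := by
  simp only [haarCoeff_eq_sum, haarCoeff1_anchoredIndicator_eq_zero hm (hP _), mul_zero,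
    Finset.sum_const_zero, haarCoeff1_natCast_id hm]
  ring

lemma haarCoeff_of_fst_mem_dyadicGrid (hP : ∀ i, (P i).1 ∈ dyadicGrid k) (hm : m < 2 ^ k)
    (j : ℤ) (l : ℕ) :
    haarCoeff P (k, j) (m, l) = haarCoeff1 j l id / 2 ^ (2 * k + 2) := by
  simp only [haarCoeff_eq_sum, haarCoeff1_anchoredIndicator_eq_zero hm (hP _), zero_mul,
    Finset.sum_const_zero, haarCoeff1_natCast_id hm]
  ring

end TensorProduct

lemma bval_div_two_pow_mem_dyadicGrid (b : Bool) {e k : ℕ} (he : e ≤ k) :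
    bval b / 2 ^ e ∈ dyadicGrid k := by
  obtain ⟨d, rfl⟩ := Nat.exists_eq_add_of_le he
  refine mem_dyadicGrid.2 ⟨if b then 2 ^ d else 0, ?_⟩
  cases b
  · simp [bval]
  · simp [bval, pow_add, field]

lemma hammersleyShifted_mem_dyadicGrid {n k : ℕ} (hk : n ≤ k) (σ t : Fin n → Bool) :
    (hammersleyShifted n σ t).1 ∈ dyadicGrid k ∧ (hammersleyShifted n σ t).2 ∈ dyadicGrid k := by
  simp only [hammersleyShifted]
  exact ⟨sum_mem fun i _ ↦ bval_div_two_pow_mem_dyadicGrid (t i) (show n - i ≤ k by lia),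
    sum_mem fun i _ ↦ bval_div_two_pow_mem_dyadicGrid (t i != σ i) (show i + 1 ≤ k by lia)⟩

theorem statement9_general {ι : Type*} [Fintype ι] [Nonempty ι] {P : ι → ℝ × ℝ} {k : ℕ}
    (hP : ∀ i, (P i).1 ∈ dyadicGrid k ∧ (P i).2 ∈ dyadicGrid k) {m : ℕ} (hm : m < 2 ^ k) :
    haarCoeff P (-1, (k : ℤ)) (0, m) = 1 / 2 ^ (2 * k + 3) ∧
    haarCoeff P ((k : ℤ), -1) (m, 0) = 1 / 2 ^ (2 * k + 3) := by
  rw [haarCoeff_of_snd_mem_dyadicGrid (fun i ↦ (hP i).2) hm,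
    haarCoeff_of_fst_mem_dyadicGrid (fun i ↦ (hP i).1) hm, haarCoeff1_neg_one_id, and_self]
  ring

/-- Haar coefficients of the local discrepancy of `R_{n,σ}` for `j = (-1,k)` or
`j = (k,-1)` with `k ≥ n`: `|μ_{j,m}| = 2^{-(2k+3)}`. -/
theorem statement9 (n : ℕ) (hn : 0 < n) (σ : Fin n → Bool)
    (k : ℕ) (hk : n ≤ k) (m : ℕ) (hm : m < 2 ^ k) :
    |haarCoeff (hammersleyShifted n σ) (-1, (k : ℤ)) (0, m)| = 1 / 2 ^ (2 * k + 3) ∧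
    |haarCoeff (hammersleyShifted n σ) ((k : ℤ), -1) (m, 0)| = 1 / 2 ^ (2 * k + 3) := by
  obtain ⟨h₁, h₂⟩ := statement9_general (hammersleyShifted_mem_dyadicGrid hk σ) hm
  rw [h₁, h₂, and_self, abs_of_pos (by positivity)]
end

section
/- Let n ∈ ℕ and σ ∈ {0,1}^n. The Haar coefficient of the local discrepancy of the symmetrized digit shifted Hammersley point set R_{n,σ}^{sym} (with N = 2^{n+1} points) for j = (−1,−1), m = (0,0) satisfies μ_{(−1,−1),(0,0)}^{sym} = ∫_{[0,1]^2} D_N(R_{n,σ}^{sym},t) dt = 2^{−(n+1)} + 2^{−2(n+1)}, independently of σ. -/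
open MeasureTheory

/-!
Integrating the counting function point by point gives
`∫ D_N(P, t) dt = (1/N) ∑ (1 - x) (1 - y) - 1/4`, the sum running over the points `(x, y)` of `P`.
At a fixed digit vector `t`, replacing `σ` by `σ ⊕ 1` keeps `x` and turns `y` into
`1 - 2⁻ⁿ - y`, so the two points with this `t` contribute `(1 - x) (1 + 2⁻ⁿ)`.
Replacing `t` by `t ⊕ 1` turns `x` into `1 - 2⁻ⁿ - x`, so `1 - x` averages to `(1 + 2⁻ⁿ) / 2`.
Hence the integral is `(1 + 2⁻ⁿ)² / 4 - 1/4`.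
-/

section BinaryExpansion

lemma sum_one_div_two_pow_succ {K : Type*} [Field K] [NeZero (2 : K)] (n : ℕ) :
    ∑ i : Fin n, (1 : K) / 2 ^ (i.val + 1) = 1 - 1 / 2 ^ n := by
  have two_ne : (2 : K) ≠ 0 := two_ne_zero
  induction n with
  | zero => simp
  | succ n ih =>
    rw [Fin.sum_univ_castSucc]
    simp only [Fin.val_castSucc, Fin.val_last, ih]
    field_simp
    ring

lemma sum_one_div_two_pow_sub {K : Type*} [Field K] [NeZero (2 : K)] (n : ℕ) :
    ∑ i : Fin n, (1 : K) / 2 ^ (n - i.val) = 1 - 1 / 2 ^ n := by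
  rw [← sum_one_div_two_pow_succ, ← Equiv.sum_comp Fin.revPerm]
  refine Finset.sum_congr rfl fun i _ => ?_
  rw [Fin.revPerm_apply, Fin.val_rev, Nat.sub_sub_self i.isLt]

lemma bval_nonneg (b : Bool) : 0 ≤ bval b := by cases b <;> simp [bval]

lemma bval_add_bval_not (b : Bool) : bval b + bval (!b) = 1 := by cases b <;> simp [bval]

lemma sum_bval_div_add_sum_bval_not_div {ι : Type*} (s : Finset ι) (b : ι → Bool) (w : ι → ℝ) :
    ∑ i ∈ s, bval (b i) / w i + ∑ i ∈ s, bval (!b i) / w i = ∑ i ∈ s, 1 / w i := by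
  simp only [← Finset.sum_add_distrib, ← add_div, bval_add_bval_not]

end BinaryExpansion

section Hammersley

variable {n : ℕ} (σ t : Fin n → Bool)

lemma hammersleyShifted_nonneg : 0 ≤ hammersleyShifted n σ t := by
  constructor <;> simp only [hammersleyShifted, Prod.fst_zero, Prod.snd_zero] <;>
    exact Finset.sum_nonneg fun _ _ => div_nonneg (bval_nonneg _) (by positivity)

lemma hammersleyShifted_fst_add_fst_compl :
    (hammersleyShifted n σ t).1 + (hammersleyShifted n σ tᶜ).1 = 1 - 1 / 2 ^ n :=
  (sum_bval_div_add_sum_bval_not_div _ t _).trans (sum_one_div_two_pow_sub n)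

lemma hammersleyShifted_snd_add_compl_snd :
    (hammersleyShifted n σ t).2 + (hammersleyShifted n σᶜ t).2 = 1 - 1 / 2 ^ n := by
  have bne_compl (i : Fin n) : (t i != σᶜ i) = !(t i != σ i) := by
    simp only [Pi.compl_apply, Bool.compl_eq_bnot, Bool.bne_not]
  simp only [hammersleyShifted, bne_compl]
  rw [sum_bval_div_add_sum_bval_not_div, sum_one_div_two_pow_succ]

lemma hammersleyShifted_mem_Icc : hammersleyShifted n σ t ∈ Set.Icc 0 1 := by
  have inv_pos : (0 : ℝ) < 1 / 2 ^ n := by positivity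
  have fst_sum := hammersleyShifted_fst_add_fst_compl σ t
  have snd_sum := hammersleyShifted_snd_add_compl_snd σ t
  have fst_compl_nonneg : 0 ≤ (hammersleyShifted n σ tᶜ).1 := (hammersleyShifted_nonneg σ tᶜ).1
  have compl_snd_nonneg : 0 ≤ (hammersleyShifted n σᶜ t).2 := (hammersleyShifted_nonneg σᶜ t).2
  refine ⟨hammersleyShifted_nonneg σ t, ?_, ?_⟩
  · rw [Prod.fst_one]
    linarith
  · rw [Prod.snd_one]
    linarith

lemma hammersleySym_mem_Icc (k : Bool × (Fin n → Bool)) : hammersleySym n σ k ∈ Set.Icc 0 1 := by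
  obtain ⟨_ | _, t⟩ := k
  · exact hammersleyShifted_mem_Icc σ t
  · exact hammersleyShifted_mem_Icc σᶜ t

lemma sum_one_sub_hammersleyShifted_fst :
    ∑ t, (1 - (hammersleyShifted n σ t).1) = 2 ^ n * (1 + 1 / 2 ^ n) / 2 := by
  have sum_compl : ∑ t, (1 - (hammersleyShifted n σ tᶜ).1) =
      ∑ t, (1 - (hammersleyShifted n σ t).1) :=
    compl_bijective.sum_comp fun t => 1 - (hammersleyShifted n σ t).1
  have pair_sum (t : Fin n → Bool) :
      (1 - (hammersleyShifted n σ t).1) + (1 - (hammersleyShifted n σ tᶜ).1) = 1 + 1 / 2 ^ n := by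
    linarith [hammersleyShifted_fst_add_fst_compl σ t]
  have sum_pairs : ∑ t, (1 - (hammersleyShifted n σ t).1) +
      ∑ t, (1 - (hammersleyShifted n σ tᶜ).1) = 2 ^ n * (1 + 1 / 2 ^ n) := by
    rw [← Finset.sum_add_distrib]
    simp only [pair_sum, Finset.sum_const, Finset.card_univ, Fintype.card_fun, Fintype.card_bool,
      Fintype.card_fin, nsmul_eq_mul, Nat.cast_pow, Nat.cast_ofNat]
  linarith

lemma sum_one_sub_mul_one_sub_hammersleySym :
    ∑ k, (1 - (hammersleySym n σ k).1) * (1 - (hammersleySym n σ k).2) =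
      2 ^ n * (1 + 1 / 2 ^ n) ^ 2 / 2 := by
  have pair_sum (t : Fin n → Bool) :
      (1 - (hammersleySym n σ (true, t)).1) * (1 - (hammersleySym n σ (true, t)).2) +
        (1 - (hammersleySym n σ (false, t)).1) * (1 - (hammersleySym n σ (false, t)).2) =
      (1 - (hammersleyShifted n σ t).1) * (1 + 1 / 2 ^ n) := by
    change (1 - (hammersleyShifted n σ t).1) * (1 - (hammersleyShifted n σᶜ t).2) +
      (1 - (hammersleyShifted n σ t).1) * (1 - (hammersleyShifted n σ t).2) = _
    linear_combination (-(1 - (hammersleyShifted n σ t).1)) *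
      hammersleyShifted_snd_add_compl_snd σ t
  rw [Fintype.sum_prod_type, Fintype.sum_bool, ← Finset.sum_add_distrib]
  simp only [pair_sum]
  rw [← Finset.sum_mul, sum_one_sub_hammersleyShifted_fst]
  ring

end Hammersley

section Integral

lemma volume_real_Icc_inter_Ioi_prod_Ioi {a b p : ℝ × ℝ} (hp : p ∈ Set.Icc a b) :
    volume.real (Set.Icc a b ∩ Set.Ioi p.1 ×ˢ Set.Ioi p.2) = (b.1 - p.1) * (b.2 - p.2) := by
  have inter_eq : Set.Icc a b ∩ Set.Ioi p.1 ×ˢ Set.Ioi p.2 =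
      Set.Ioc p.1 b.1 ×ˢ Set.Ioc p.2 b.2 := by
    have Icc_inter_Ioi {x y z : ℝ} (h : x ≤ z) : Set.Icc x y ∩ Set.Ioi z = Set.Ioc z y := by
      grind
    rw [Set.Icc_prod_eq, Set.prod_inter_prod, Icc_inter_Ioi hp.1.1, Icc_inter_Ioi hp.1.2]
  rw [inter_eq, Measure.volume_eq_prod, measureReal_prod_prod,
    Real.volume_real_Ioc_of_le hp.2.1, Real.volume_real_Ioc_of_le hp.2.2]

lemma setIntegral_Icc_fst_mul_snd {a b : ℝ × ℝ} (hab : a ≤ b) :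
    ∫ t in Set.Icc a b, t.1 * t.2 = (b.1 ^ 2 - a.1 ^ 2) / 2 * ((b.2 ^ 2 - a.2 ^ 2) / 2) := by
  have setIntegral_Icc_id {x y : ℝ} (h : x ≤ y) :
      ∫ s in Set.Icc x y, s = (y ^ 2 - x ^ 2) / 2 := by
    rw [integral_Icc_eq_integral_Ioc, ← intervalIntegral.integral_of_le h, integral_id]
  rw [Set.Icc_prod_eq, Measure.volume_eq_prod,
    setIntegral_prod_mul (fun s : ℝ => s) (fun s : ℝ => s),
    setIntegral_Icc_id hab.1, setIntegral_Icc_id hab.2]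

variable {ι : Type*} [Fintype ι] {P : ι → ℝ × ℝ}

lemma countIn_eq_sum_indicator (hP : ∀ k, 0 ≤ P k) (t : ℝ × ℝ) :
    (countIn P t : ℝ) = ∑ k, (Set.Ioi (P k).1 ×ˢ Set.Ioi (P k).2).indicator 1 t := by
  classical
  simp only [countIn, Finset.card_filter, Nat.cast_sum, Set.indicator_apply]
  refine Finset.sum_congr rfl fun k _ => ?_
  have fst_nonneg : 0 ≤ (P k).1 := (hP k).1
  have snd_nonneg : 0 ≤ (P k).2 := (hP k).2
  simp [fst_nonneg, snd_nonneg]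

lemma integrableOn_indicator_Ioi_prod_Ioi (a b p : ℝ × ℝ) :
    IntegrableOn ((Set.Ioi p.1 ×ˢ Set.Ioi p.2).indicator (1 : ℝ × ℝ → ℝ)) (Set.Icc a b) :=
  (integrableOn_const isCompact_Icc.measure_lt_top.ne).indicator
    (measurableSet_Ioi.prod measurableSet_Ioi)

lemma integrableOn_countIn (hP : ∀ k, 0 ≤ P k) (a b : ℝ × ℝ) :
    IntegrableOn (fun t => (countIn P t : ℝ)) (Set.Icc a b) := by
  simp only [countIn_eq_sum_indicator hP]
  exact integrable_finsetSum _ fun k _ => integrableOn_indicator_Ioi_prod_Ioi a b (P k)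

lemma setIntegral_countIn {b : ℝ × ℝ} (hP : ∀ k, P k ∈ Set.Icc 0 b) :
    ∫ t in Set.Icc 0 b, (countIn P t : ℝ) = ∑ k, (b.1 - (P k).1) * (b.2 - (P k).2) := by
  simp only [countIn_eq_sum_indicator fun k => (hP k).1]
  rw [integral_finsetSum _ fun k _ => integrableOn_indicator_Ioi_prod_Ioi 0 b (P k)]
  refine Finset.sum_congr rfl fun k _ => ?_
  rw [setIntegral_indicator (measurableSet_Ioi.prod measurableSet_Ioi)]
  simp only [Pi.one_apply, setIntegral_one_eq_measureReal,
    volume_real_Icc_inter_Ioi_prod_Ioi (hP k)]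

lemma setIntegral_localDisc (hP : ∀ k, P k ∈ Set.Icc 0 1) :
    ∫ t in Set.Icc (0 : ℝ × ℝ) 1, localDisc P t =
      (∑ k, (1 - (P k).1) * (1 - (P k).2)) / Fintype.card ι - 1 / 4 := by
  have integrable_mul : IntegrableOn (fun t : ℝ × ℝ => t.1 * t.2) (Set.Icc 0 1) :=
    (continuous_fst.mul continuous_snd).continuousOn.integrableOn_compact isCompact_Icc
  simp only [localDisc]
  rw [integral_sub ((integrableOn_countIn (fun k => (hP k).1) 0 1).div_const _) integrable_mul,
    integral_div, setIntegral_countIn hP, setIntegral_Icc_fst_mul_snd zero_le_one]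
  norm_num

end Integral

section HaarCoefficient

lemma haar1_neg_one (m : ℕ) : haar1 (-1) m = (Set.Ico 0 1).indicator 1 := by
  ext x
  simp [haar1, Set.indicator_apply]

lemma haarCoeff_neg_one_neg_one {ι : Type*} [Fintype ι] (P : ι → ℝ × ℝ) (m : ℕ × ℕ) :
    haarCoeff P (-1, -1) m = ∫ t in Set.Icc (0 : ℝ × ℝ) 1, localDisc P t := by
  have Icc_ae_eq : Set.Icc (0 : ℝ × ℝ) 1 =ᵐ[volume] Set.Ico (0 : ℝ) 1 ×ˢ Set.Ico (0 : ℝ) 1 := by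
    rw [Set.Icc_prod_eq, Measure.volume_eq_prod]
    exact Measure.set_prod_ae_eq Ico_ae_eq_Icc.symm Ico_ae_eq_Icc.symm
  rw [haarCoeff, setIntegral_congr_set Icc_ae_eq, setIntegral_congr_set Icc_ae_eq]
  refine setIntegral_congr_fun (measurableSet_Ico.prod measurableSet_Ico) fun t ht => ?_
  simp only [haar2, haar1_neg_one, Set.indicator_of_mem ht.1, Set.indicator_of_mem ht.2,
    Pi.one_apply, mul_one]

end HaarCoefficient

/-- The Haar coefficient for `j = (-1,-1)`, `m = (0,0)` of the local discrepancy of the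
symmetrized set equals `2^{-(n+1)} + 2^{-2(n+1)}`, independently of `σ`. -/
theorem statement14 (n : ℕ) (hn : 0 < n) (σ : Fin n → Bool) :
    haarCoeff (hammersleySym n σ) (-1, -1) (0, 0) =
      1 / 2 ^ (n + 1) + 1 / 2 ^ (2 * (n + 1)) ∧
    (∫ t in Set.Icc (0 : ℝ × ℝ) 1, localDisc (hammersleySym n σ) t) =
      1 / 2 ^ (n + 1) + 1 / 2 ^ (2 * (n + 1)) := by
  have card_eq : (Fintype.card (Bool × (Fin n → Bool)) : ℝ) = 2 * 2 ^ n := by simp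
  have integral_eq : ∫ t in Set.Icc (0 : ℝ × ℝ) 1, localDisc (hammersleySym n σ) t =
      1 / 2 ^ (n + 1) + 1 / 2 ^ (2 * (n + 1)) := by
    rw [setIntegral_localDisc (hammersleySym_mem_Icc σ),
      sum_one_sub_mul_one_sub_hammersleySym, card_eq, pow_mul']
    field_simp
    ring
  exact ⟨(haarCoeff_neg_one_neg_one _ _).trans integral_eq, integral_eq⟩
end
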